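/- For every integer n ≥ 2, the maximum number of separated pairs among permutations of length n satisfies the recurrence τ(n) = ⌊(n − 1)/2⌋ + τ(⌊n/2⌋). -/

import Mathlib

/-- `(v+1, v)` (0-based values) is a separated pair of `π`. -/
def IsSepPair {n : ℕ} (π : Equiv.Perm (Fin n)) (v : Fin n) : Prop :=
  ∃ p q r : Fin n, p < q ∧ q < r ∧
    (π p : ℕ) = (v : ℕ) + 1 ∧ (v : ℕ) + 1 < (π q : ℕ) ∧ π r = v

/-- number of separated pairs of `π`. -/
noncomputable def sep {n : ℕ} (π : Equiv.Perm (Fin n)) : ℕ :=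
  {v : Fin n | IsSepPair π v}.ncard

/-- `tau n` is the maximum of `sep` over all permutations of length `n`. -/
noncomputable def tau (n : ℕ) : ℕ :=
  Finset.univ.sup fun π : Equiv.Perm (Fin n) => sep π

/-!
Both sides are computed by the closed form `τ(n) = n - Nat.size n`, where `Nat.size n` is the number
of binary digits of `n`.

Upper bound: along a run of consecutive separated pairs the positions of the values decrease, so
the separators of these pairs lie in disjoint intervals of positions and are distinct values above
the run. Hence a run is at most as long as the set of values above it, and each value that starts
no separated pair at most halves the range of values still to be covered.

Lower bound: write the `⌈n/2⌉` smallest values in decreasing order at the even positions (counted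
from `0`) and an optimal arrangement of the `⌊n/2⌋` largest values at the odd positions. Then all
pairs of consecutive small values are separated, and no separated pair of large values is lost.
-/

open Finset Order

section UpperBound

/-- To be read with `pos` the inverse of a permutation and `x` the value that separates `succ w`
from `w`. -/
theorem card_Ico_le_card_Ioi_of_forall_exists_mem_Ioo {α β : Type*} [LinearOrder α] [SuccOrder α]
    [IsSuccArchimedean α] [LocallyFiniteOrder α] [LocallyFiniteOrderTop α] [Preorder β]
    {pos : α → β} {v u : α}
    (h : ∀ w ∈ Ico v u, ∃ x, succ w < x ∧ pos x ∈ Set.Ioo (pos (succ w)) (pos w)) :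
    #(Ico v u) ≤ #(Ioi u) := by
  choose! x hx using h
  have pos_anti : StrictAntiOn pos (Set.Icc v u) :=
    strictAntiOn_of_succ_lt Set.ordConnected_Icc fun w hw hwvu hsucc ↦
      have hmem := hx w (mem_Ico.2 ⟨hwvu.1, (lt_succ_of_not_isMax hw).trans_le hsucc.2⟩)
      hmem.2.1.trans hmem.2.2
  have succ_mem : ∀ w ∈ Ico v u, succ w ∈ Set.Icc v u := fun w hw ↦
    have hw := mem_Ico.1 hw
    ⟨hw.1.trans (le_succ w), succ_le_of_lt hw.2⟩
  have x_above : ∀ w ∈ Ico v u, x w ∈ Ioi u := fun w hw ↦ by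
    by_contra hle
    rw [mem_Ioi, not_lt] at hle
    have hsucc := succ_mem w hw
    obtain ⟨hlt, hpos⟩ := hx w hw
    exact (pos_anti hsucc ⟨hsucc.1.trans hlt.le, hle⟩ hlt).not_gt hpos.1
  have pos_x_anti : StrictAntiOn (pos ∘ x) (Ico v u : Set α) := fun a ha b hb hab ↦
    calc pos (x b) < pos b := (hx b hb).2.2
      _ ≤ pos (succ a) := pos_anti.antitoneOn (succ_mem a ha)
          (Set.Ico_subset_Icc_self (mem_Ico.1 hb)) (succ_le_of_lt hab)
      _ < pos (x a) := (hx a ha).2.1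
  exact card_le_card_of_injOn x x_above pos_x_anti.injOn.of_comp

theorem lt_two_pow_card_of_forall_exists_card_Ico_le {n : ℕ} (S : Finset (Fin n))
    (h : ∀ v, ∃ u ∈ S, v ≤ u ∧ #(Ico v u) ≤ #(Ioi u)) : n < 2 ^ #S := by
  suffices key : ∀ v, n - v < 2 ^ #{s ∈ S | v ≤ s.val} by simpa using key 0
  intro v
  induction hd : n - v using Nat.strong_induction_on generalizing v with
  | _ d ih =>
    subst hd
    obtain hv | hv := le_or_gt n v
    · simp [Nat.sub_eq_zero_of_le hv]
    obtain ⟨u, huS, hvu, hcard⟩ := h ⟨v, hv⟩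
    simp only [Fin.le_def, Fin.card_Ico, Fin.card_Ioi] at hvu hcard
    have hrest := ih (n - (u + 1)) (by omega) (u + 1) rfl
    have hsubset : {s ∈ S | u.val + 1 ≤ s.val} ⊆ {s ∈ S | v ≤ s.val} :=
      monotone_filter_right S fun s _ (hs : u.val + 1 ≤ s.val) ↦ by omega
    have hcard_lt : #{s ∈ S | u.val + 1 ≤ s.val} < #{s ∈ S | v ≤ s.val} :=
      card_lt_card <| (ssubset_iff_of_subset hsubset).2 ⟨u, by simp [huS, hvu], by simp⟩
    calc n - v < 2 * 2 ^ #{s ∈ S | u.val + 1 ≤ s.val} := by omega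
      _ = 2 ^ (#{s ∈ S | u.val + 1 ≤ s.val} + 1) := (pow_succ' ..).symm
      _ ≤ 2 ^ #{s ∈ S | v ≤ s.val} := Nat.pow_le_pow_right two_pos hcard_lt

variable {n : ℕ} {π : Equiv.Perm (Fin n)} {v : Fin n}

theorem IsSepPair.not_isMax (h : IsSepPair π v) : ¬IsMax v := by
  obtain ⟨p, -, -, -, -, hp, -⟩ := h
  exact fun hv ↦ (hv.isTop (π p)).not_gt (by rw [Fin.lt_def]; omega)

theorem IsSepPair.exists_mem_Ioo (h : IsSepPair π v) :
    ∃ x, succ v < x ∧ π.symm x ∈ Set.Ioo (π.symm (succ v)) (π.symm v) := by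
  obtain ⟨p, q, r, hpq, hqr, hp, hq, rfl⟩ := h
  have hcov : π r ⋖ π p := by rw [Fin.covBy_iff, Order.covBy_iff_add_one_eq, hp]
  rw [hcov.succ_eq]
  exact ⟨π q, Fin.lt_def.2 (by omega), by simpa using ⟨hpq, hqr⟩⟩

variable (π v) in
theorem exists_not_isSepPair_card_Ico_le_card_Ioi :
    ∃ u, ¬IsSepPair π u ∧ v ≤ u ∧ #(Ico v u) ≤ #(Ioi u) := by
  have hex : ∃ u, v ≤ u ∧ ¬IsSepPair π u := by
    obtain ⟨top, hvtop, htop⟩ := Finite.exists_le_maximal (p := (v ≤ ·)) le_rfl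
    exact ⟨top, hvtop, fun hsep ↦ hsep.not_isMax fun w hw ↦ htop.2 (hvtop.trans hw) hw⟩
  obtain ⟨u, ⟨hvu, hu⟩, hmin⟩ := exists_minimal_of_wellFoundedLT _ hex
  refine ⟨u, hu, hvu, card_Ico_le_card_Ioi_of_forall_exists_mem_Ioo (pos := π.symm) fun w hw ↦ ?_⟩
  obtain ⟨hvw, hwu⟩ := mem_Ico.1 hw
  have hsep : IsSepPair π w := by_contra fun hns ↦ (hmin ⟨hvw, hns⟩ hwu.le).not_gt hwu
  exact hsep.exists_mem_Ioo

variable (π) in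
theorem sep_add_size_le : sep π + n.size ≤ n := by
  classical
  have hsize : n.size ≤ #{v | ¬IsSepPair π v} :=
    Nat.size_le.2 <| lt_two_pow_card_of_forall_exists_card_Ico_le _ fun v ↦ by
      simpa using exists_not_isSepPair_card_Ico_le_card_Ioi π v
  have hsep : sep π = #{v | IsSepPair π v} := by
    rw [sep, Set.ncard_eq_toFinset_card', Set.toFinset_ofPred]
  calc sep π + n.size ≤ #{v | IsSepPair π v} + #{v | ¬IsSepPair π v} := by gcongr; exact hsep.le
    _ = n := by rw [card_filter_add_card_filter_not, card_univ, Fintype.card_fin]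

end UpperBound

section LowerBound

variable {m k : ℕ}

/-- The positions `0, …, m + k - 1`, where `m` is `k` or `k + 1`, split into the `m` even ones and
the `k` odd ones. -/
noncomputable def alternate (hkm : k ≤ m) (hmk : m ≤ k + 1) : Fin m ⊕ Fin k ≃ Fin (m + k) :=
  Equiv.ofBijective
    (Sum.elim (fun i ↦ ⟨2 * i, by omega⟩) (fun j ↦ ⟨2 * j + 1, by omega⟩)) <| by
    refine (Fintype.bijective_iff_injective_and_card _).2 ⟨?_, by simp⟩
    rintro (i | i) (j | j) hij <;>
      simp only [Sum.elim_inl, Sum.elim_inr, Sum.inl.injEq, Sum.inr.injEq, reduceCtorEq,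
        Fin.ext_iff] at hij ⊢ <;>
      omega

variable (hkm : k ≤ m) (hmk : m ≤ k + 1) (σ : Equiv.Perm (Fin k))

theorem val_alternate_inl (i : Fin m) : (alternate hkm hmk (.inl i) : ℕ) = 2 * i := rfl

theorem val_alternate_inr (j : Fin k) : (alternate hkm hmk (.inr j) : ℕ) = 2 * j + 1 := rfl

/-- The permutation of length `m + k` with the `m` smallest values in decreasing order at the even
positions and the `k` largest values in the order given by `σ` at the odd positions. -/
noncomputable def alternatePerm : Equiv.Perm (Fin (m + k)) :=
  (alternate hkm hmk).symm.trans ((Fin.revPerm.sumCongr σ).trans finSumFinEquiv)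

theorem alternatePerm_alternate_inl (i : Fin m) :
    alternatePerm hkm hmk σ (alternate hkm hmk (.inl i)) = Fin.castAdd k i.rev := by
  simp [alternatePerm]

theorem alternatePerm_alternate_inr (j : Fin k) :
    alternatePerm hkm hmk σ (alternate hkm hmk (.inr j)) = Fin.natAdd m (σ j) := by
  simp [alternatePerm]

theorem isSepPair_alternatePerm_castAdd {i : Fin m} (hi : (i : ℕ) < m - 1) :
    IsSepPair (alternatePerm hkm hmk σ) (Fin.castAdd k i) := by
  let next : Fin m := ⟨i + 1, by omega⟩
  let between : Fin k := ⟨next.rev, by simp only [next, Fin.val_rev]; omega⟩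
  refine ⟨alternate hkm hmk (.inl next.rev), alternate hkm hmk (.inr between),
    alternate hkm hmk (.inl i.rev), ?_, ?_, ?_, ?_, ?_⟩
  · rw [Fin.lt_def, val_alternate_inl, val_alternate_inr]
    exact Nat.lt_succ_self _
  · rw [Fin.lt_def, val_alternate_inl, val_alternate_inr, Fin.val_rev]
    simp only [next, Fin.val_rev]
    omega
  · rw [alternatePerm_alternate_inl, Fin.rev_rev, Fin.val_castAdd, Fin.val_castAdd]
  · rw [alternatePerm_alternate_inr, Fin.val_natAdd, Fin.val_castAdd]
    omega
  · rw [alternatePerm_alternate_inl, Fin.rev_rev]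

variable {σ} in
theorem IsSepPair.alternatePerm_natAdd {v : Fin k} (hv : IsSepPair σ v) :
    IsSepPair (alternatePerm hkm hmk σ) (Fin.natAdd m v) := by
  obtain ⟨p, q, r, hpq, hqr, hp, hq, hr⟩ := hv
  refine ⟨alternate hkm hmk (.inr p), alternate hkm hmk (.inr q),
    alternate hkm hmk (.inr r), ?_, ?_, ?_, ?_, ?_⟩
  · rw [Fin.lt_def, val_alternate_inr, val_alternate_inr]
    omega
  · rw [Fin.lt_def, val_alternate_inr, val_alternate_inr]
    omega
  · rw [alternatePerm_alternate_inr, Fin.val_natAdd, Fin.val_natAdd, hp, add_assoc]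
  · rw [alternatePerm_alternate_inr, Fin.val_natAdd, Fin.val_natAdd]
    omega
  · rw [alternatePerm_alternate_inr, hr]

theorem le_sep_alternatePerm : m - 1 + sep σ ≤ sep (alternatePerm hkm hmk σ) := by
  have hcard : {i : Fin m | (i : ℕ) < m - 1}.ncard = m - 1 := by
    rw [Set.ncard_eq_toFinset_card', Set.toFinset_ofPred, Fin.card_filter_val_lt]
    omega
  let small : Set (Fin (m + k)) := Fin.castAdd k '' {i | (i : ℕ) < m - 1}
  let large : Set (Fin (m + k)) := Fin.natAdd m '' {v | IsSepPair σ v}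
  have hdisj : Disjoint small large := by
    rw [Set.disjoint_left]
    rintro _ ⟨i, -, rfl⟩ ⟨v, -, hv⟩
    have hval := congr_arg Fin.val hv
    rw [Fin.val_natAdd, Fin.val_castAdd] at hval
    omega
  have hsub : small ∪ large ⊆ {v | IsSepPair (alternatePerm hkm hmk σ) v} := by
    rintro _ (⟨i, hi, rfl⟩ | ⟨v, hv, rfl⟩)
    · exact isSepPair_alternatePerm_castAdd hkm hmk σ hi
    · exact hv.alternatePerm_natAdd hkm hmk
  calc m - 1 + sep σ = small.ncard + large.ncard := by
        rw [Set.ncard_image_of_injective _ (Fin.castAdd_injective m k), hcard,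
          Set.ncard_image_of_injective _ (Fin.natAdd_injective k m), sep]
    _ = (small ∪ large).ncard := (Set.ncard_union_eq hdisj).symm
    _ ≤ sep (alternatePerm hkm hmk σ) := Set.ncard_le_ncard hsub

end LowerBound

theorem sep_le_tau {n : ℕ} (π : Equiv.Perm (Fin n)) : sep π ≤ tau n :=
  le_sup (f := fun π : Equiv.Perm (Fin n) => sep π) (mem_univ π)

theorem exists_sep_eq_tau (n : ℕ) : ∃ π : Equiv.Perm (Fin n), sep π = tau n := by
  obtain ⟨π, -, h⟩ := exists_mem_eq_sup univ univ_nonempty fun π : Equiv.Perm (Fin n) => sep π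
  exact ⟨π, h.symm⟩

theorem div_two_add_tau_div_two_le_tau (n : ℕ) : (n - 1) / 2 + tau (n / 2) ≤ tau n := by
  obtain ⟨σ, hσ⟩ := exists_sep_eq_tau (n / 2)
  have h := (le_sep_alternatePerm (m := (n + 1) / 2) (by omega) (by omega) σ).trans (sep_le_tau _)
  rwa [hσ, show (n + 1) / 2 + n / 2 = n by omega,
    show (n + 1) / 2 - 1 = (n - 1) / 2 by omega] at h

theorem size_eq_size_div_two_add_one {n : ℕ} (hn : n ≠ 0) : n.size = (n / 2).size + 1 := by
  have h : Nat.bit n.bodd n.div2 = n := n.bit_bodd_div2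
  rw [← Nat.div2_val, ← Nat.succ_eq_add_one, ← Nat.size_bit (b := n.bodd) (by rwa [h]), h]

theorem tau_add_size (n : ℕ) : tau n + n.size = n := by
  refine le_antisymm ?_ ?_
  · obtain ⟨π, hπ⟩ := exists_sep_eq_tau n
    exact hπ ▸ sep_add_size_le π
  · induction n using Nat.strong_induction_on with
    | _ n ih =>
      obtain rfl | hn := eq_or_ne n 0
      · exact Nat.zero_le _
      have := ih (n / 2) (by omega)
      have := div_two_add_tau_div_two_le_tau n
      have := size_eq_size_div_two_add_one hn
      omega

/-- For `n ≥ 2`, `τ(n) = ⌊(n-1)/2⌋ + τ(⌊n/2⌋)`. -/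
theorem tau_recurrence (n : ℕ) (hn : 2 ≤ n) : tau n = (n - 1) / 2 + tau (n / 2) := by
  have hτn := tau_add_size n
  have hτhalf := tau_add_size (n / 2)
  have hsize := size_eq_size_div_two_add_one (n := n) (by omega)
  omega
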